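/- Let N ≥ 1 and let ν_N be the pushforward of the standard Gaussian measure γ_N on ℝ^N under the map g ↦ (g_j − (1/N)·Σ_{j'=1}^N g_{j'})_{j=1}^N. Let μ be a probability measure on ℝ^n that approximately matches the moments of the standard Gaussian up to degree k with slack η. Define T : ℝ^n × (ℝ^N)^n → ℝ^{n×N} by T(x, z)_{(i,j)} = x_i/√N + (z_i)_j. Then the pushforward of the product measure μ ⊗ ν_N^{⊗n} under T approximately matches the moments of the standard Gaussian on ℝ^{n×N} up to degree k with slack (2k)^{k/2}·η. -/

import Mathlib

open MeasureTheory ProbabilityTheory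

/-- The standard Gaussian measure on `ι → ℝ` (product of `N(0,1)`). -/
noncomputable def stdGaussianPi (ι : Type) [Fintype ι] : Measure (ι → ℝ) :=
  Measure.pi fun _ => gaussianReal 0 1

/-- `μ` approximately matches the moments of the standard Gaussian up to degree `k`
with slack `η`. -/
def MomentMatches {ι : Type} [Fintype ι] (k : ℕ) (η : ℝ)
    (μ : Measure (ι → ℝ)) : Prop :=
  ∀ α : ι → ℕ, (∑ i, α i) ≤ k →
    Integrable (fun x => ∏ i, |x i| ^ α i) μ ∧
    |(∫ x, ∏ i, (x i) ^ α i ∂μ) - ∫ y, ∏ i, (y i) ^ α i ∂(stdGaussianPi ι)| ≤ η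

/-- The centered Gaussian measure on `ℝ^N` with variances `1 - 1/N` and pairwise
covariances `-1/N`, realized as the pushforward of the standard Gaussian under
`g ↦ g - (mean of g) · (1,…,1)`. -/
noncomputable def nuN (N : ℕ) : Measure (Fin N → ℝ) :=
  Measure.map (fun g : Fin N → ℝ => fun j => g j - (1 / (N : ℝ)) * ∑ j', g j')
    (stdGaussianPi (Fin N))


/-!
Expanding a monomial of the lifted vector binomially and integrating out the noise `z` writes its
moment as a linear combination of moments of `μ` of degree at most `k`, with the same coefficients
for every `μ`. Replacing `μ` by the standard Gaussian therefore changes a moment of exponent `α` by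
at most `η * 𝔼 ∏ p, (1 / √N + |z p|) ^ α p`. By comparison of characteristic functions the lift of
the standard Gaussian is exactly standard Gaussian, so it remains to bound this expectation. By
weighted AM-GM it is at most `𝔼 (1 / √N + |g|) ^ d` with `d = ∑ p, α p` and `g` a centered Gaussian
of variance `1 - 1 / N`; Jensen and the Cauchy-Schwarz inequality in `ℝ²` bound the square of the
latter by `𝔼 (1 + g₁ ^ 2) ^ d` for a standard Gaussian `g₁`, and `𝔼 g₁ ^ (2 * l) ≤ (2 * d - 1) ^ l`
for `l ≤ d` gives `(2 * d) ^ d`.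
-/

section GaussianMoments

lemma integrable_pow_gaussianReal (m : ℝ) (v : NNReal) (l : ℕ) :
    Integrable (fun x : ℝ => x ^ l) (gaussianReal m v) := by
  have hnorm := (memLp_id_gaussianReal (μ := m) (v := v) (l : NNReal)).integrable_norm_pow'
  exact (integrable_norm_iff (by fun_prop)).1 (by simpa using hnorm)

lemma hasDerivAt_gaussianPDFReal (m : ℝ) (v : NNReal) (x : ℝ) :
    HasDerivAt (gaussianPDFReal m v) (-((x - m) / v * gaussianPDFReal m v x)) x := by
  have hexponent : HasDerivAt (fun x : ℝ => -(x - m) ^ 2 / (2 * v)) (-((x - m) / v)) x := by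
    convert! (((hasDerivAt_id x).sub_const m).pow 2).neg.div_const (2 * (v : ℝ)) using 1
    simp only [id, Nat.cast_ofNat, Nat.add_one_sub_one, pow_one, mul_one]
    rw [← mul_neg, mul_div_mul_left _ _ two_ne_zero, neg_div]
  rw [gaussianPDFReal_def]
  convert! hexponent.exp.const_mul (√(2 * Real.pi * v))⁻¹ using 1
  ring

lemma integrable_gaussianReal_iff {m : ℝ} {v : NNReal} (hv : v ≠ 0) {f : ℝ → ℝ} :
    Integrable f (gaussianReal m v) ↔ Integrable fun x => f x * gaussianPDFReal m v x := by
  rw [gaussianReal_of_var_ne_zero _ hv, integrable_withDensity_iff (measurable_gaussianPDF m v)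
    (Filter.Eventually.of_forall fun _ => gaussianPDF_lt_top)]
  simp only [toReal_gaussianPDF]

lemma integral_sub_mul_gaussianReal {m : ℝ} {v : NNReal} {f f' : ℝ → ℝ}
    (hderiv : ∀ x, HasDerivAt f (f' x) x) (hf : Integrable f (gaussianReal m v))
    (hf' : Integrable f' (gaussianReal m v))
    (hmul : Integrable (fun x => (x - m) * f x) (gaussianReal m v)) :
    ∫ x, (x - m) * f x ∂gaussianReal m v = v * ∫ x, f' x ∂gaussianReal m v := by
  rcases eq_or_ne v 0 with rfl | hv
  · simp [gaussianReal_zero_var]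
  have hv' : (v : ℝ) ≠ 0 := NNReal.coe_ne_zero.2 hv
  rw [integrable_gaussianReal_iff hv] at hf hf' hmul
  have hparts := integral_mul_deriv_eq_deriv_mul_of_integrable
    (fun x _ => hderiv x) (fun x _ => hasDerivAt_gaussianPDFReal m v x)
    ((hmul.div_const (-v : ℝ)).congr (.of_forall fun x => by simp only [Pi.mul_apply]; field_simp))
    hf' hf
  simp only [integral_gaussianReal_eq_integral_smul hv, smul_eq_mul]
  calc ∫ x, gaussianPDFReal m v x * ((x - m) * f x)
      = ∫ x, -v * (f x * -((x - m) / v * gaussianPDFReal m v x)) := by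
        congr with x; field_simp
    _ = v * ∫ x, gaussianPDFReal m v x * f' x := by
        rw [integral_const_mul, hparts, neg_mul_neg]
        simp only [mul_comm]

lemma integral_pow_add_two_gaussianReal (v : NNReal) (l : ℕ) :
    ∫ x : ℝ, x ^ (l + 2) ∂gaussianReal 0 v = v * ((l + 1) * ∫ x : ℝ, x ^ l ∂gaussianReal 0 v) := by
  have hstein := integral_sub_mul_gaussianReal (m := 0) (v := v)
    (f := fun x => x ^ (l + 1)) (f' := fun x => (l + 1 : ℕ) * x ^ l)
    (fun x => hasDerivAt_pow (l + 1) x) (integrable_pow_gaussianReal 0 v _)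
    ((integrable_pow_gaussianReal 0 v _).const_mul _)
    ((integrable_pow_gaussianReal 0 v (l + 2)).congr (.of_forall fun x => by simp only; ring))
  rw [integral_const_mul] at hstein
  calc ∫ x : ℝ, x ^ (l + 2) ∂gaussianReal 0 v
      = ∫ x : ℝ, (x - 0) * x ^ (l + 1) ∂gaussianReal 0 v := by congr with x; ring
    _ = v * ((l + 1) * ∫ x : ℝ, x ^ l ∂gaussianReal 0 v) := by rw [hstein]; push_cast; rfl

lemma integral_pow_two_mul_gaussianReal_le (v : NNReal) {l d : ℕ} (hld : l ≤ d) :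
    ∫ x : ℝ, x ^ (2 * l) ∂gaussianReal 0 v ≤ ((2 * d - 1) * v) ^ l := by
  induction l with
  | zero => simp
  | succ l ih =>
    have hl : (l : ℝ) + 1 ≤ d := mod_cast hld
    have hbase : 0 ≤ (2 * d - 1) * (v : ℝ) := mul_nonneg (by linarith) v.2
    calc ∫ x : ℝ, x ^ (2 * l + 2) ∂gaussianReal 0 v
        = (2 * l + 1) * v * ∫ x : ℝ, x ^ (2 * l) ∂gaussianReal 0 v := by
          rw [integral_pow_add_two_gaussianReal]; push_cast; ring
      _ ≤ (2 * d - 1) * v * ((2 * d - 1) * v) ^ l := by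
          gcongr
          · exact integral_nonneg fun x => (even_two_mul l).pow_nonneg x
          · linarith
          · exact ih (by omega)
      _ = ((2 * d - 1) * v) ^ (l + 1) := (pow_succ' _ _).symm

lemma one_add_pow_eq_sum {R : Type*} [CommSemiring R] (x : R) (d : ℕ) :
    (1 + x) ^ d = ∑ l ∈ Finset.range (d + 1), (d.choose l : R) * x ^ l := by
  simp only [add_comm 1 x, add_pow, one_pow, mul_one, mul_comm (Nat.cast _)]

lemma integrable_one_add_sq_pow_gaussianReal (m : ℝ) (v : NNReal) (d : ℕ) :
    Integrable (fun x : ℝ => (1 + x ^ 2) ^ d) (gaussianReal m v) := by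
  simp only [one_add_pow_eq_sum, ← pow_mul]
  exact integrable_finsetSum _ fun l _ => (integrable_pow_gaussianReal m v _).const_mul _

lemma integral_one_add_sq_pow_gaussianReal_le (v : NNReal) (d : ℕ) :
    ∫ x : ℝ, (1 + x ^ 2) ^ d ∂gaussianReal 0 v ≤ (1 + (2 * d - 1) * v : ℝ) ^ d := by
  simp only [one_add_pow_eq_sum, ← pow_mul]
  rw [integral_finsetSum _ fun l _ => (integrable_pow_gaussianReal 0 v _).const_mul _]
  refine Finset.sum_le_sum fun l hl => ?_
  rw [integral_const_mul]
  gcongr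
  exact integral_pow_two_mul_gaussianReal_le v (Finset.mem_range_succ_iff.1 hl)

lemma gaussianReal_eq_map_sqrt_mul (v : NNReal) :
    gaussianReal 0 v = (gaussianReal 0 1).map (√(v : ℝ) * ·) := by
  rw [gaussianReal_map_const_mul]
  congr 1
  · simp
  · ext; simp

lemma integrable_add_abs_pow_gaussianReal (m : ℝ) (v : NNReal) (a : ℝ) (d : ℕ) :
    Integrable (fun x : ℝ => (a + |x|) ^ d) (gaussianReal m v) := by
  have hmem : MemLp (fun x : ℝ => a + |x|) (d : NNReal) (gaussianReal m v) :=
    (memLp_const a).add (memLp_id_gaussianReal (d : NNReal)).norm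
  exact (integrable_norm_iff (by fun_prop)).1 (by simpa using hmem.integrable_norm_pow')

lemma sq_integral_le_integral_sq {Ω : Type*} [MeasurableSpace Ω] {ρ : Measure Ω}
    [IsProbabilityMeasure ρ] {f : Ω → ℝ} (hf : Integrable f ρ)
    (hf_sq : Integrable (fun ω => f ω ^ 2) ρ) : (∫ ω, f ω ∂ρ) ^ 2 ≤ ∫ ω, f ω ^ 2 ∂ρ :=
  even_two.convexOn_pow.map_integral_le (continuous_pow 2).continuousOn isClosed_univ
    (by simp) hf hf_sq

lemma integral_add_abs_sq_pow_gaussianReal_le (a : ℝ) (v : NNReal) (d : ℕ) :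
    ∫ x : ℝ, ((a + |x|) ^ 2) ^ d ∂gaussianReal 0 v ≤ (2 * d * (a ^ 2 + v)) ^ d := by
  have hcauchy (x : ℝ) : (a + |√(v : ℝ) * x|) ^ 2 ≤ (a ^ 2 + v) * (1 + x ^ 2) := by
    have hsqrt : √(v : ℝ) ^ 2 = v := Real.sq_sqrt v.2
    rw [abs_mul, abs_of_nonneg (Real.sqrt_nonneg _), ← sq_abs x]
    nth_rw 2 [← hsqrt]
    linarith [sq_nonneg (a * |x| - √(v : ℝ))]
  have hint := integrable_one_add_sq_pow_gaussianReal 0 1 d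
  calc ∫ x : ℝ, ((a + |x|) ^ 2) ^ d ∂gaussianReal 0 v
      = ∫ x : ℝ, ((a + |√(v : ℝ) * x|) ^ 2) ^ d ∂gaussianReal 0 1 := by
        rw [gaussianReal_eq_map_sqrt_mul, integral_map (by fun_prop) (by fun_prop)]
    _ ≤ ∫ x : ℝ, (a ^ 2 + v) ^ d * (1 + x ^ 2) ^ d ∂gaussianReal 0 1 := by
        refine integral_mono_of_nonneg (.of_forall fun x => by positivity) (hint.const_mul _)
          (.of_forall fun x => ?_)
        simp only [← mul_pow]
        exact pow_le_pow_left₀ (sq_nonneg _) (hcauchy x) d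
    _ ≤ (a ^ 2 + v) ^ d * (1 + (2 * d - 1) * (1 : NNReal)) ^ d := by
        rw [integral_const_mul]
        gcongr
        exact integral_one_add_sq_pow_gaussianReal_le 1 d
    _ = (2 * d * (a ^ 2 + v)) ^ d := by rw [← mul_pow, NNReal.coe_one]; ring

lemma integral_add_abs_pow_gaussianReal_le (a : ℝ) (v : NNReal) (d : ℕ) :
    ∫ x : ℝ, (a + |x|) ^ d ∂gaussianReal 0 v ≤ (2 * d * (a ^ 2 + v)) ^ ((d : ℝ) / 2) := by
  have hsq : (∫ x : ℝ, (a + |x|) ^ d ∂gaussianReal 0 v) ^ 2 ≤ (2 * d * (a ^ 2 + v)) ^ d :=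
    calc (∫ x : ℝ, (a + |x|) ^ d ∂gaussianReal 0 v) ^ 2
        ≤ ∫ x : ℝ, ((a + |x|) ^ d) ^ 2 ∂gaussianReal 0 v :=
          sq_integral_le_integral_sq (integrable_add_abs_pow_gaussianReal 0 v a d)
            (by simpa only [pow_mul] using integrable_add_abs_pow_gaussianReal 0 v a (d * 2))
      _ = ∫ x : ℝ, ((a + |x|) ^ 2) ^ d ∂gaussianReal 0 v := by simp only [← pow_mul, mul_comm]
      _ ≤ (2 * d * (a ^ 2 + v)) ^ d := integral_add_abs_sq_pow_gaussianReal_le a v d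
  refine (Real.le_sqrt_of_sq_le hsq).trans_eq ?_
  rw [Real.sqrt_eq_rpow, ← Real.rpow_natCast, ← Real.rpow_mul (by positivity), mul_one_div]

end GaussianMoments

section MixedMoments

variable {Ω κ : Type*} [MeasurableSpace Ω] [Fintype κ] {ρ : Measure Ω}

lemma prod_pow_le_sum_div_mul_pow_sum {w : κ → ℝ} (hw : ∀ p, 0 ≤ w p) {α : κ → ℕ}
    (hα : ∑ p, α p ≠ 0) :
    ∏ p, w p ^ α p ≤ ∑ p, (α p : ℝ) / (∑ q, α q : ℕ) * w p ^ ∑ q, α q := by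
  set d := ∑ q, α q with hd
  have hd' : (d : ℝ) ≠ 0 := Nat.cast_ne_zero.2 hα
  calc ∏ p, w p ^ α p = ∏ p, (w p ^ d) ^ ((α p : ℝ) / d) := by
        refine Finset.prod_congr rfl fun p _ => ?_
        rw [← Real.rpow_natCast (w p) d, ← Real.rpow_mul (hw p), mul_div_cancel₀ _ hd',
          Real.rpow_natCast]
    _ ≤ ∑ p, (α p : ℝ) / d * w p ^ d :=
        Real.geom_mean_le_arith_mean_weighted _ _ _ (fun p _ => by positivity)
          (by rw [← Finset.sum_div, ← Nat.cast_sum, ← hd, div_self hd'])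
          fun p _ => pow_nonneg (hw p) d

lemma integrable_prod_pow [IsFiniteMeasure ρ] {w : κ → Ω → ℝ} {α : κ → ℕ}
    (hw : ∀ p, MemLp (w p) (∑ q, α q : ℕ) ρ) : Integrable (fun ω => ∏ p, w p ω ^ α p) ρ := by
  rcases eq_or_ne (∑ q, α q) 0 with hα | hα
  · have hzero : ∀ p, α p = 0 := by simpa using hα
    simp [hzero]
  refine Integrable.mono' (integrable_finsetSum Finset.univ fun p _ =>
    (hw p).integrable_norm_pow'.const_mul ((α p : ℝ) / (∑ q, α q : ℕ))) ?_ (.of_forall fun ω => ?_)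
  · exact Finset.aestronglyMeasurable_fun_prod _ fun p _ => (hw p).aestronglyMeasurable.pow _
  · simp only [norm_prod, norm_pow]
    exact prod_pow_le_sum_div_mul_pow_sum (fun p => norm_nonneg _) hα

lemma integral_prod_pow_le {w : κ → Ω → ℝ} (hw : ∀ p ω, 0 ≤ w p ω) {α : κ → ℕ}
    (hα : ∑ p, α p ≠ 0) (hint : ∀ p, Integrable (fun ω => w p ω ^ ∑ q, α q) ρ) {B : ℝ}
    (hB : ∀ p, ∫ ω, w p ω ^ ∑ q, α q ∂ρ ≤ B) : ∫ ω, ∏ p, w p ω ^ α p ∂ρ ≤ B := by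
  set d := ∑ q, α q with hd
  have hint' (p : κ) : Integrable (fun ω => (α p : ℝ) / d * w p ω ^ d) ρ := (hint p).const_mul _
  calc ∫ ω, ∏ p, w p ω ^ α p ∂ρ
      ≤ ∫ ω, ∑ p, (α p : ℝ) / d * w p ω ^ d ∂ρ :=
        integral_mono_of_nonneg
          (.of_forall fun ω => Finset.prod_nonneg fun p _ => pow_nonneg (hw p ω) _)
          (integrable_finsetSum _ fun p _ => hint' p)
          (.of_forall fun ω => prod_pow_le_sum_div_mul_pow_sum (fun p => hw p ω) hα)
    _ = ∑ p, (α p : ℝ) / d * ∫ ω, w p ω ^ d ∂ρ := by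
        simp only [integral_finsetSum _ fun p _ => hint' p, integral_const_mul]
    _ ≤ ∑ p, (α p : ℝ) / d * B := by gcongr with p; exact hB p
    _ = B := by
        rw [← Finset.sum_mul, ← Finset.sum_div, ← Nat.cast_sum, ← hd,
          div_self (Nat.cast_ne_zero.2 hα), one_mul]

end MixedMoments

section GaussianNoise

variable {Ω κ : Type*} [MeasurableSpace Ω] [Fintype κ] {ρ : Measure Ω}

lemma memLp_of_hasLaw_gaussianReal {X : Ω → ℝ} {m : ℝ} {v : NNReal}
    (hX : HasLaw X (gaussianReal m v) ρ) (d : ℕ) : MemLp X d ρ := by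
  have hid : MemLp id d (ρ.map X) := by
    rw [hX.map_eq]
    exact_mod_cast memLp_id_gaussianReal (d : NNReal)
  exact (memLp_map_measure_iff (by fun_prop) hX.aemeasurable).1 hid

lemma monotone_two_mul_rpow_half : Monotone fun d : ℕ => ((2 * d : ℕ) : ℝ) ^ ((d : ℝ) / 2) := by
  intro d k hdk
  rcases Nat.eq_zero_or_pos k with rfl | hk
  · rw [Nat.le_zero.1 hdk]
  calc ((2 * d : ℕ) : ℝ) ^ ((d : ℝ) / 2)
      ≤ ((2 * k : ℕ) : ℝ) ^ ((d : ℝ) / 2) := by gcongr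
    _ ≤ ((2 * k : ℕ) : ℝ) ^ ((k : ℝ) / 2) := by
        gcongr
        exact_mod_cast (by omega : 1 ≤ 2 * k)

lemma integral_prod_add_abs_pow_le [IsProbabilityMeasure ρ] {Z : κ → Ω → ℝ} {v : NNReal}
    (hZ : ∀ p, HasLaw (Z p) (gaussianReal 0 v) ρ) {a : ℝ} (ha : 0 ≤ a) (hav : a ^ 2 + v ≤ 1)
    (α : κ → ℕ) :
    ∫ ω, ∏ p, (a + |Z p ω|) ^ α p ∂ρ ≤ ((2 * ∑ p, α p : ℕ) : ℝ) ^ (((∑ p, α p : ℕ) : ℝ) / 2) := by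
  rcases eq_or_ne (∑ p, α p) 0 with hα | hα
  · have hzero : ∀ p, α p = 0 := by simpa using hα
    simp [hzero]
  refine integral_prod_pow_le (fun p ω => by positivity) hα (fun p => ?_) fun p => ?_
  · have hint := integrable_add_abs_pow_gaussianReal 0 v a (∑ q, α q)
    rw [← (hZ p).map_eq] at hint
    exact hint.comp_aemeasurable (hZ p).aemeasurable
  · calc ∫ ω, (a + |Z p ω|) ^ ∑ q, α q ∂ρ
        = ∫ x, (a + |x|) ^ ∑ q, α q ∂gaussianReal 0 v :=
          (hZ p).integral_comp (f := fun x => (a + |x|) ^ ∑ q, α q) (by fun_prop)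
      _ ≤ (2 * (∑ q, α q : ℕ) * (a ^ 2 + v)) ^ (((∑ q, α q : ℕ) : ℝ) / 2) :=
          integral_add_abs_pow_gaussianReal_le a v _
      _ ≤ ((2 * ∑ q, α q : ℕ) : ℝ) ^ (((∑ q, α q : ℕ) : ℝ) / 2) := by
          gcongr
          rw [Nat.cast_mul, Nat.cast_ofNat]
          exact mul_le_of_le_one_right (by positivity) hav

end GaussianNoise

section NoisyLift

variable {Ω ι κ : Type*}

/-- The vector indexed by `κ` whose coordinate `p` is `a * x (r p) + Z p ω`: each coordinate of `x`
is scaled and copied along `r`, then perturbed by the noise `Z`. -/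
def noisyLift (a : ℝ) (r : κ → ι) (Z : κ → Ω → ℝ) (q : (ι → ℝ) × Ω) (p : κ) : ℝ :=
  a * q.1 (r p) + Z p q.2

lemma aemeasurable_noisyLift [MeasurableSpace Ω] [Countable κ] {μ : Measure (ι → ℝ)}
    {ρ : Measure Ω} (a : ℝ) (r : κ → ι) {Z : κ → Ω → ℝ} (hZ : ∀ p, AEMeasurable (Z p) ρ) :
    AEMeasurable (noisyLift a r Z) (μ.prod ρ) := by
  refine aemeasurable_pi_lambda _ fun p => ?_
  have hsignal : Measurable fun q : (ι → ℝ) × Ω => a * q.1 (r p) := by fun_prop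
  exact hsignal.aemeasurable.add (hZ p).comp_snd

variable [Fintype ι] [Fintype κ]

/-- The coefficient of `∏ p, x p ^ β p` in the expansion of `∏ p, (a * x p + z p) ^ α p`. -/
noncomputable def liftCoeff (a : ℝ) (α β : κ → ℕ) (z : κ → ℝ) : ℝ :=
  ∏ p, (α p).choose (β p) * a ^ β p * z p ^ (α p - β p)

/-- The multi-index on `ι` obtained by summing `β` over the fibres of `r`; it is the exponent of the
monomial `∏ p, x (r p) ^ β p` in the variables `x i`. -/
def fiberDegree [DecidableEq ι] (r : κ → ι) (β : κ → ℕ) (i : ι) : ℕ :=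
  ∑ p with r p = i, β p

lemma sum_fiberDegree [DecidableEq ι] (r : κ → ι) (β : κ → ℕ) :
    ∑ i, fiberDegree r β i = ∑ p, β p := by
  simp only [fiberDegree, Finset.sum_fiberwise]

lemma prod_comp_pow_eq_prod_pow_fiberDegree [DecidableEq ι] (r : κ → ι) (β : κ → ℕ)
    (x : ι → ℝ) :
    ∏ p, x (r p) ^ β p = ∏ i, x i ^ fiberDegree r β i := by
  rw [← Finset.prod_fiberwise _ r]
  refine Finset.prod_congr rfl fun i _ => ?_
  rw [fiberDegree, ← Finset.prod_pow_eq_pow_sum]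
  exact Finset.prod_congr rfl fun p hp => by rw [(Finset.mem_filter.1 hp).2]

lemma abs_liftCoeff (a : ℝ) (α β : κ → ℕ) (z : κ → ℝ) :
    |liftCoeff a α β z| = liftCoeff |a| α β fun p => |z p| := by
  simp only [liftCoeff, Finset.abs_prod, abs_mul, abs_pow, Nat.abs_cast]

lemma prod_mul_add_pow_eq_sum [DecidableEq κ] (a : ℝ) (α : κ → ℕ) (x z : κ → ℝ) :
    ∏ p, (a * x p + z p) ^ α p =
      ∑ β ∈ Finset.Iic α, (∏ p, x p ^ β p) * liftCoeff a α β z := by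
  simp only [add_pow, Nat.range_succ_eq_Iic, Finset.prod_univ_sum, liftCoeff,
    ← Finset.prod_mul_distrib]
  refine Finset.sum_congr rfl fun β _ => Finset.prod_congr rfl fun p _ => ?_
  ring

lemma sum_abs_liftCoeff [DecidableEq κ] (a : ℝ) (α : κ → ℕ) (z : κ → ℝ) :
    ∑ β ∈ Finset.Iic α, |liftCoeff a α β z| = ∏ p, (|a| + |z p|) ^ α p := by
  simpa only [abs_liftCoeff, mul_one, one_pow, Finset.prod_const_one, one_mul]
    using (prod_mul_add_pow_eq_sum |a| α (fun _ => 1) fun p => |z p|).symm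

lemma prod_noisyLift_pow_eq_sum [DecidableEq ι] [DecidableEq κ] (a : ℝ) (r : κ → ι)
    (Z : κ → Ω → ℝ) (α : κ → ℕ) (q : (ι → ℝ) × Ω) :
    ∏ p, noisyLift a r Z q p ^ α p =
      ∑ β ∈ Finset.Iic α,
        (∏ i, q.1 i ^ fiberDegree r β i) * liftCoeff a α β fun p => Z p q.2 := by
  simp only [← prod_comp_pow_eq_prod_pow_fiberDegree]
  exact prod_mul_add_pow_eq_sum a α (fun p => q.1 (r p)) fun p => Z p q.2

variable [MeasurableSpace Ω] {ρ : Measure Ω} [IsFiniteMeasure ρ] {Z : κ → Ω → ℝ} {α : κ → ℕ}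

lemma integrable_liftCoeff (a : ℝ) (β : κ → ℕ) (hZ : ∀ p, MemLp (Z p) (∑ q, α q : ℕ) ρ) :
    Integrable (fun ω => liftCoeff a α β fun p => Z p ω) ρ := by
  simp only [liftCoeff, Finset.prod_mul_distrib]
  refine (integrable_prod_pow fun p => (hZ p).mono_exponent ?_).const_mul _
  gcongr
  exact Nat.sub_le _ _

variable {μ μ' : Measure (ι → ℝ)}

lemma integrable_monomial_mul_liftCoeff [DecidableEq ι] (a : ℝ) (r : κ → ι)
    (hμ : ∀ β : ι → ℕ, ∑ i, β i ≤ ∑ p, α p → Integrable (fun x => ∏ i, x i ^ β i) μ)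
    (hZ : ∀ p, MemLp (Z p) (∑ q, α q : ℕ) ρ) {β : κ → ℕ} (hβ : β ≤ α) :
    Integrable (fun q : (ι → ℝ) × Ω =>
      (∏ i, q.1 i ^ fiberDegree r β i) * liftCoeff a α β fun p => Z p q.2) (μ.prod ρ) :=
  (hμ _ ((sum_fiberDegree r β).trans_le (Finset.sum_le_sum fun p _ => hβ p))).mul_prod
    (integrable_liftCoeff a β hZ)

lemma integrable_prod_noisyLift_pow (a : ℝ) (r : κ → ι)
    (hμ : ∀ β : ι → ℕ, ∑ i, β i ≤ ∑ p, α p → Integrable (fun x => ∏ i, x i ^ β i) μ)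
    (hZ : ∀ p, MemLp (Z p) (∑ q, α q : ℕ) ρ) :
    Integrable (fun q => ∏ p, noisyLift a r Z q p ^ α p) (μ.prod ρ) := by
  classical
  simp only [prod_noisyLift_pow_eq_sum]
  exact integrable_finsetSum _ fun β hβ =>
    integrable_monomial_mul_liftCoeff a r hμ hZ (Finset.mem_Iic.1 hβ)

lemma integral_prod_noisyLift_pow [DecidableEq ι] [DecidableEq κ] [SFinite μ] (a : ℝ) (r : κ → ι)
    (hμ : ∀ β : ι → ℕ, ∑ i, β i ≤ ∑ p, α p → Integrable (fun x => ∏ i, x i ^ β i) μ)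
    (hZ : ∀ p, MemLp (Z p) (∑ q, α q : ℕ) ρ) :
    ∫ q, ∏ p, noisyLift a r Z q p ^ α p ∂μ.prod ρ =
      ∑ β ∈ Finset.Iic α, (∫ x, ∏ i, x i ^ fiberDegree r β i ∂μ) *
        ∫ ω, liftCoeff a α β (fun p => Z p ω) ∂ρ := by
  simp only [prod_noisyLift_pow_eq_sum]
  rw [integral_finsetSum _ fun β hβ =>
    integrable_monomial_mul_liftCoeff a r hμ hZ (Finset.mem_Iic.1 hβ)]
  exact Finset.sum_congr rfl fun β _ =>
    integral_prod_mul (fun x : ι → ℝ => ∏ i, x i ^ fiberDegree r β i)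
      fun ω => liftCoeff a α β fun p => Z p ω

lemma abs_integral_prod_noisyLift_pow_sub_le [SFinite μ] [SFinite μ'] (a : ℝ) (r : κ → ι) {η : ℝ}
    (hμ : ∀ β : ι → ℕ, ∑ i, β i ≤ ∑ p, α p → Integrable (fun x => ∏ i, x i ^ β i) μ)
    (hμ' : ∀ β : ι → ℕ, ∑ i, β i ≤ ∑ p, α p → Integrable (fun x => ∏ i, x i ^ β i) μ')
    (hclose : ∀ β : ι → ℕ, ∑ i, β i ≤ ∑ p, α p →
      |(∫ x, ∏ i, x i ^ β i ∂μ) - ∫ x, ∏ i, x i ^ β i ∂μ'| ≤ η)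
    (hZ : ∀ p, MemLp (Z p) (∑ q, α q : ℕ) ρ) :
    |(∫ q, ∏ p, noisyLift a r Z q p ^ α p ∂μ.prod ρ) -
        ∫ q, ∏ p, noisyLift a r Z q p ^ α p ∂μ'.prod ρ| ≤
      η * ∫ ω, ∏ p, (|a| + |Z p ω|) ^ α p ∂ρ := by
  classical
  simp only [integral_prod_noisyLift_pow a r hμ hZ, integral_prod_noisyLift_pow a r hμ' hZ,
    ← Finset.sum_sub_distrib, ← sub_mul, ← sum_abs_liftCoeff]
  rw [integral_finsetSum _ fun β _ => (integrable_liftCoeff a β hZ).abs, Finset.mul_sum]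
  refine (Finset.abs_sum_le_sum_abs _ _).trans (Finset.sum_le_sum fun β hβ => ?_)
  have hdeg : ∑ i, fiberDegree r β i ≤ ∑ p, α p :=
    (sum_fiberDegree r β).trans_le (Finset.sum_le_sum fun p _ => Finset.mem_Iic.1 hβ p)
  rw [abs_mul]
  exact mul_le_mul (hclose _ hdeg) abs_integral_le_integral_abs (abs_nonneg _)
    ((abs_nonneg _).trans (hclose _ hdeg))

end NoisyLift

section GaussianLift

variable {ι : Type} [Fintype ι]

instance isProbabilityMeasure_stdGaussianPi : IsProbabilityMeasure (stdGaussianPi ι) := by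
  unfold stdGaussianPi
  infer_instance

lemma integrable_prod_pow_stdGaussianPi (β : ι → ℕ) :
    Integrable (fun x => ∏ i, x i ^ β i) (stdGaussianPi ι) :=
  Integrable.fintype_prod (f := fun i y => y ^ β i) fun i => integrable_pow_gaussianReal 0 1 (β i)

lemma charFunDual_gaussianReal_zero_one (L : StrongDual ℝ ℝ) :
    charFunDual (gaussianReal 0 1) L = Complex.exp (-(L 1 ^ 2 : ℝ) / 2) := by
  rw [IsGaussian.charFunDual_eq, integral_complex_ofReal, integral_continuousLinearMap_gaussianReal,
    variance_continuousLinearMap_gaussianReal]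
  simp [neg_div, sq_nonneg]

lemma charFunDual_stdGaussianPi [DecidableEq ι] (L : StrongDual ℝ (ι → ℝ)) :
    charFunDual (stdGaussianPi ι) L =
      Complex.exp (-(∑ i, L (Pi.single i 1) ^ 2 : ℝ) / 2) := by
  rw [stdGaussianPi, charFunDual_pi]
  simp only [charFunDual_gaussianReal_zero_one, ContinuousLinearMap.comp_apply,
    ContinuousLinearMap.single_apply, ← Complex.exp_sum]
  push_cast
  rw [← Finset.sum_div, Finset.sum_neg_distrib]

/-- Subtraction of the mean, `g ↦ g - (mean of g) • 1`, as a continuous linear map. -/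
noncomputable def centering (N : ℕ) : (Fin N → ℝ) →L[ℝ] (Fin N → ℝ) :=
  .pi fun j => .proj j - (1 / (N : ℝ)) • ∑ j', .proj j'

lemma centering_apply {N : ℕ} (g : Fin N → ℝ) (j : Fin N) :
    centering N g j = g j - (1 / (N : ℝ)) * ∑ j', g j' := by
  simp [centering]

lemma nuN_eq_map_centering (N : ℕ) : nuN N = (stdGaussianPi (Fin N)).map (centering N) := by
  rw [nuN]
  congr with g j
  exact (centering_apply g j).symm

instance isProbabilityMeasure_nuN (N : ℕ) : IsProbabilityMeasure (nuN N) := by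
  rw [nuN_eq_map_centering]
  exact Measure.isProbabilityMeasure_map (by fun_prop)

lemma centering_single {N : ℕ} (j : Fin N) :
    centering N (Pi.single j 1) = Pi.single j 1 - (1 / (N : ℝ)) • ∑ j', Pi.single j' 1 := by
  ext j'
  simp [centering_apply, Finset.sum_apply, Pi.single_apply]

lemma sum_sub_mean_sq {N : ℕ} (c : Fin N → ℝ) :
    ∑ j, (c j - (1 / (N : ℝ)) * ∑ j', c j') ^ 2 =
      ∑ j, c j ^ 2 - (1 / (N : ℝ)) * (∑ j, c j) ^ 2 := by
  rcases eq_or_ne N 0 with rfl | hN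
  · simp
  simp only [sub_sq, Finset.sum_add_distrib, Finset.sum_sub_distrib, ← Finset.sum_mul,
    ← Finset.mul_sum, Finset.sum_const, Finset.card_univ, Fintype.card_fin, nsmul_eq_mul]
  field_simp
  ring

lemma charFunDual_nuN (N : ℕ) (L : StrongDual ℝ (Fin N → ℝ)) :
    charFunDual (nuN N) L =
      Complex.exp (-(∑ j, L (Pi.single j 1) ^ 2 -
        (1 / (N : ℝ)) * (∑ j, L (Pi.single j 1)) ^ 2 : ℝ) / 2) := by
  rw [nuN_eq_map_centering, charFunDual_map, charFunDual_stdGaussianPi, ← sum_sub_mean_sq]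
  simp only [ContinuousLinearMap.comp_apply, centering_single, map_sub, map_smul, map_sum,
    smul_eq_mul]

lemma coe_toNNReal_one_sub_one_div_natCast (N : ℕ) :
    ((1 - 1 / (N : ℝ)).toNNReal : ℝ) = 1 - 1 / N := by
  rw [one_div]
  exact Real.coe_toNNReal _ (sub_nonneg.2 (Nat.cast_inv_le_one N))

lemma map_eval_nuN {N : ℕ} (j : Fin N) :
    (nuN N).map (fun z => z j) = gaussianReal 0 (1 - 1 / (N : ℝ)).toNNReal := by
  have : IsProbabilityMeasure ((nuN N).map fun z => z j) :=
    Measure.isProbabilityMeasure_map (measurable_pi_apply j).aemeasurable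
  refine Measure.ext_of_charFun (funext fun t => ?_)
  rw [charFun_gaussianReal, coe_toNNReal_one_sub_one_div_natCast]
  refine (charFun_map_eq_charFunDual_smul (μ := nuN N)
    (.proj (R := ℝ) (φ := fun _ => ℝ) j) t).trans ?_
  rw [charFunDual_nuN]
  have hsingle (j' : Fin N) :
      (t • .proj j : StrongDual ℝ (Fin N → ℝ)) (Pi.single j' 1) = if j = j' then t else 0 := by
    simp [Pi.single_apply]
  simp only [hsingle, ite_pow, zero_pow two_ne_zero, Finset.sum_ite_eq, Finset.mem_univ, if_true]
  congr 1
  push_cast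
  ring

lemma hasLaw_eval_pi_nuN {N : ℕ} (p : ι × Fin N) :
    HasLaw (fun z : ι → Fin N → ℝ => z p.1 p.2) (gaussianReal 0 (1 - 1 / (N : ℝ)).toNNReal)
      (Measure.pi fun _ : ι => nuN N) :=
  HasLaw.comp (Y := fun y : Fin N → ℝ => y p.2)
    ⟨(measurable_pi_apply p.2).aemeasurable, map_eval_nuN p.2⟩
    (measurePreserving_eval (fun _ : ι => nuN N) p.1).hasLaw

/-- The map `T` of the theorem, `T (x, z) (i, j) = x i / √N + z i j`, as a continuous linear map. -/
noncomputable def gaussianLift (ι : Type) [Fintype ι] (N : ℕ) :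
    (ι → ℝ) × (ι → Fin N → ℝ) →L[ℝ] (ι × Fin N → ℝ) :=
  .pi fun p => (√(N : ℝ))⁻¹ • (.proj p.1 ∘L .fst ℝ _ _) +
    .proj p.2 ∘L (.proj p.1 : (ι → Fin N → ℝ) →L[ℝ] Fin N → ℝ) ∘L .snd ℝ _ _

lemma gaussianLift_apply {N : ℕ} (q : (ι → ℝ) × (ι → Fin N → ℝ)) (p : ι × Fin N) :
    gaussianLift ι N q p = (√(N : ℝ))⁻¹ * q.1 p.1 + q.2 p.1 p.2 := by
  simp [gaussianLift]

lemma coe_gaussianLift (N : ℕ) :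
    ⇑(gaussianLift ι N) = noisyLift (√(N : ℝ))⁻¹ Prod.fst fun p z => z p.1 p.2 :=
  funext₂ gaussianLift_apply

lemma gaussianLift_inl_single [DecidableEq ι] {N : ℕ} (i : ι) :
    gaussianLift ι N (Pi.single i 1, 0) = (√(N : ℝ))⁻¹ • ∑ j, Pi.single (i, j) 1 := by
  ext ⟨i', j'⟩
  rcases eq_or_ne i' i with rfl | hi <;>
    simp_all [gaussianLift_apply, Finset.sum_apply, Pi.single_apply]

lemma gaussianLift_inr_single [DecidableEq ι] {N : ℕ} (i : ι) (j : Fin N) :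
    gaussianLift ι N (0, Pi.single i (Pi.single j 1)) = Pi.single (i, j) 1 := by
  ext ⟨i', j'⟩
  rcases eq_or_ne i' i with rfl | hi <;> simp_all [gaussianLift_apply, Pi.single_apply]

lemma map_gaussianLift_stdGaussianPi (N : ℕ) :
    ((stdGaussianPi ι).prod (Measure.pi fun _ => nuN N)).map (gaussianLift ι N) =
      stdGaussianPi (ι × Fin N) := by
  classical
  have := Measure.isProbabilityMeasure_map
    (μ := (stdGaussianPi ι).prod (Measure.pi fun _ : ι => nuN N)) (f := gaussianLift ι N)
    (by fun_prop)
  refine Measure.ext_of_charFunDual (funext fun L => ?_)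
  rw [charFunDual_map, charFunDual_prod, charFunDual_stdGaussianPi, charFunDual_pi,
    charFunDual_stdGaussianPi]
  simp only [charFunDual_nuN, ContinuousLinearMap.comp_apply, ContinuousLinearMap.inl_apply,
    ContinuousLinearMap.inr_apply, ContinuousLinearMap.single_apply, gaussianLift_inl_single,
    gaussianLift_inr_single, map_smul, map_sum, smul_eq_mul, Fintype.sum_prod_type]
  rw [← Complex.exp_sum, ← Complex.exp_add]
  congr 1
  rw [← Finset.sum_div, Finset.sum_neg_distrib, ← Complex.ofReal_sum, ← add_div, ← neg_add,
    ← Complex.ofReal_add, ← Finset.sum_add_distrib]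
  simp only [mul_pow, inv_pow, Real.sq_sqrt (Nat.cast_nonneg N), one_div, add_sub_cancel]

end GaussianLift

namespace MomentMatches

variable {Ω : Type*} {ι κ : Type} [MeasurableSpace Ω] [Fintype ι] [Fintype κ] {k : ℕ} {η : ℝ}
  {μ : Measure (ι → ℝ)}

lemma slack_nonneg (hμ : MomentMatches k η μ) : 0 ≤ η :=
  (abs_nonneg _).trans (hμ 0 (by simp)).2

lemma isFiniteMeasure (hμ : MomentMatches k η μ) : IsFiniteMeasure μ :=
  (integrable_const_iff_isFiniteMeasure one_ne_zero).1
    (by simpa using (hμ 0 (by simp)).1 : Integrable (fun _ => (1 : ℝ)) μ)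

lemma integrable_prod_pow (hμ : MomentMatches k η μ) {β : ι → ℕ} (hβ : ∑ i, β i ≤ k) :
    Integrable (fun x => ∏ i, x i ^ β i) μ := by
  have hmeas : Measurable fun x : ι → ℝ => ∏ i, x i ^ β i := by fun_prop
  refine (integrable_norm_iff hmeas.aestronglyMeasurable).1 ?_
  simpa only [norm_prod, norm_pow, Real.norm_eq_abs] using (hμ β hβ).1

theorem map_noisyLift {ρ : Measure Ω} [IsFiniteMeasure ρ] {a C : ℝ} {r : κ → ι} {Z : κ → Ω → ℝ}
    (hμ : MomentMatches k η μ) (hZ : ∀ p, MemLp (Z p) k ρ)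
    (hlaw : ((stdGaussianPi ι).prod ρ).map (noisyLift a r Z) = stdGaussianPi κ)
    (hC : ∀ α : κ → ℕ, ∑ p, α p ≤ k → ∫ ω, ∏ p, (|a| + |Z p ω|) ^ α p ∂ρ ≤ C) :
    MomentMatches k (C * η) ((μ.prod ρ).map (noisyLift a r Z)) := by
  intro α hα
  have := hμ.isFiniteMeasure
  have hlift (μ' : Measure (ι → ℝ)) : AEMeasurable (noisyLift a r Z) (μ'.prod ρ) :=
    aemeasurable_noisyLift a r fun p => (hZ p).aestronglyMeasurable.aemeasurable
  have hZα (p : κ) : MemLp (Z p) (∑ q, α q : ℕ) ρ := (hZ p).mono_exponent (mod_cast hα)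
  have hμα (β : ι → ℕ) (hβ : ∑ i, β i ≤ ∑ p, α p) : Integrable (fun x => ∏ i, x i ^ β i) μ :=
    hμ.integrable_prod_pow (hβ.trans hα)
  have habs : Measurable fun y : κ → ℝ => ∏ p, |y p| ^ α p := by fun_prop
  have hmonomial : Measurable fun y : κ → ℝ => ∏ p, y p ^ α p := by fun_prop
  constructor
  · rw [integrable_map_measure habs.aestronglyMeasurable (hlift μ)]
    simpa only [norm_prod, norm_pow, Real.norm_eq_abs, Function.comp_def]
      using (integrable_prod_noisyLift_pow a r hμα hZα).norm
  · rw [← hlaw, integral_map (hlift μ) hmonomial.aestronglyMeasurable,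
      integral_map (hlift _) hmonomial.aestronglyMeasurable]
    calc _ ≤ η * ∫ ω, ∏ p, (|a| + |Z p ω|) ^ α p ∂ρ :=
          abs_integral_prod_noisyLift_pow_sub_le a r hμα
            (fun β _ => integrable_prod_pow_stdGaussianPi β)
            (fun β hβ => (hμ β (hβ.trans hα)).2) hZα
      _ ≤ η * C := mul_le_mul_of_nonneg_left (hC α hα) hμ.slack_nonneg
      _ = C * η := mul_comm _ _

end MomentMatches

theorem momentMatches_of_lift_general {ι : Type} [Fintype ι] (N k : ℕ) (η : ℝ)
    (μ : Measure (ι → ℝ)) (hμ : MomentMatches k η μ) :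
    MomentMatches k (((2 * k : ℕ) : ℝ) ^ ((k : ℝ) / 2) * η)
      (Measure.map
        (fun q : (ι → ℝ) × (ι → Fin N → ℝ) =>
          fun ij : ι × Fin N => q.1 ij.1 / Real.sqrt N + q.2 ij.1 ij.2)
        (μ.prod (Measure.pi fun _ : ι => nuN N))) := by
  have hmap : (fun (q : (ι → ℝ) × (ι → Fin N → ℝ)) (p : ι × Fin N) =>
      q.1 p.1 / √(N : ℝ) + q.2 p.1 p.2) = noisyLift (√(N : ℝ))⁻¹ Prod.fst fun p z => z p.1 p.2 := by
    ext q p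
    rw [noisyLift, div_eq_inv_mul]
  rw [hmap]
  refine hμ.map_noisyLift (fun p => memLp_of_hasLaw_gaussianReal (hasLaw_eval_pi_nuN p) k)
    ?_ fun α hα => ?_
  · rw [← coe_gaussianLift, map_gaussianLift_stdGaussianPi]
  · rw [abs_of_nonneg (by positivity)]
    refine (integral_prod_add_abs_pow_le hasLaw_eval_pi_nuN (by positivity) ?_ α).trans
      (monotone_two_mul_rpow_half hα)
    rw [coe_toNNReal_one_sub_one_div_natCast, inv_pow, Real.sq_sqrt (Nat.cast_nonneg N), one_div,
      add_sub_cancel]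

theorem momentMatches_of_lift (n N k : ℕ) (hn : 1 ≤ n) (hN : 1 ≤ N) (η : ℝ)
    (μ : Measure (Fin n → ℝ)) [IsProbabilityMeasure μ]
    (hμ : MomentMatches k η μ) :
    MomentMatches k (((2 * k : ℕ) : ℝ) ^ ((k : ℝ) / 2) * η)
      (Measure.map
        (fun q : (Fin n → ℝ) × (Fin n → Fin N → ℝ) =>
          fun ij : Fin n × Fin N => q.1 ij.1 / Real.sqrt N + q.2 ij.1 ij.2)
        (μ.prod (Measure.pi fun _ : Fin n => nuN N))) :=
  momentMatches_of_lift_general N k η μ hμ
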